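/- For all integers m, l the matrices of the vector representation satisfy: (i) [X^+_i(m), X^−_j(l)] = 0 whenever i ≠ j in {1,…,n}; (ii) for 1 ≤ i ≤ n−1, [X^+_i(m), X^−_i(l)] = q^{−i(m+l)}(e_{i+1,i+1} − e_{ii}) + ξ^{m+l} q^{i(m+l)}(e_{i′i′} − e_{(i+1)′(i+1)′}); (iii) [X^+_n(2m), X^−_n(2l)] = q^{−2n(m+l)}(e_{n+1,n+1} − e_{nn}). -/

import Mathlib

/-!
Every `X^±_i(k)` is a combination of at most two matrix units, so each commutator is expanded by
bilinearity and the rule `e_{ab} e_{cd} = δ_{bc} e_{ad}`. For `i ≠ j` all the inner labels differ: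
`i = j` or `i + j = 2n` would be needed, and the latter is impossible for distinct
`i, j ≤ n`. For `i = j < n` only the diagonal products within each of the two summands survive,
because the labels `i, i+1` never meet `i', (i+1)'`. The scalars combine through
`x^m x^l = x^{m+l}`, valid since `q` and `ξ` are nonzero.
-/

set_option maxHeartbeats 1000000
set_option synthInstance.maxHeartbeats 1000000

noncomputable section

open Matrix

/-- The base field `ℚ(q)`. -/
abbrev FF : Type := RatFunc ℚ

/-- The indeterminate `q` of `ℚ(q)`. -/
def qF : FF := RatFunc.X

/-- `ξ = −q^{−2n}`. -/
def xiF (n : ℕ) : FF := -qF ^ (-(2 * (n : ℤ)))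

/-- The matrix unit `e_{ab}` with 1-based labels `a, b ∈ {1,…,2n}`. -/
def eMat (n : ℕ) (a b : ℕ) : Matrix (Fin (2*n)) (Fin (2*n)) FF :=
  fun r c => if r.val + 1 = a ∧ c.val + 1 = b then 1 else 0

/-- `d_i = 1` for `i < n` and `d_n = 2` (1-based). -/
def dC (n : ℕ) (i : Fin n) : ℕ := if i.val + 1 = n then 2 else 1

/-- `q_i = q^{d_i}`. -/
def qC (n : ℕ) (i : Fin n) : FF := qF ^ (dC n i : ℤ)

/-- The Cartan matrix of type `C_n` (0-based indexing). -/
def AC (n : ℕ) (i j : Fin n) : ℤ :=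
  if i = j then 2
  else if i.val + 1 = j.val ∨ j.val + 1 = i.val then
    (if i.val + 2 = n ∧ j.val + 1 = n then -2 else -1)
  else 0

/-- The `q`-number `[k]_x = (x^k − x^{−k})/(x − x^{−1})`. -/
def qNum (x : FF) (k : ℤ) : FF := (x ^ k - x ^ (-k)) / (x - x⁻¹)

/-- The image of the Drinfeld generator `x^+_{i,k}` in the vector representation
(`0` for odd `k` when `i = n`). -/
def XP (n : ℕ) (i : Fin n) (k : ℤ) : Matrix (Fin (2*n)) (Fin (2*n)) FF :=
  if i.val + 1 = n then
    (if 2 ∣ k then (-(qF ^ (-(n : ℤ) * k))) • eMat n (n+1) n else 0)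
  else
    (-(qF ^ (-((i.val : ℤ) + 1) * k))) • eMat n (i.val + 2) (i.val + 1)
      + (xiF n ^ k * qF ^ (((i.val : ℤ) + 1) * k)) • eMat n (2*n - i.val) (2*n - i.val - 1)

/-- The image of the Drinfeld generator `x^-_{i,k}` in the vector representation. -/
def XM (n : ℕ) (i : Fin n) (k : ℤ) : Matrix (Fin (2*n)) (Fin (2*n)) FF :=
  if i.val + 1 = n then
    (if 2 ∣ k then (-(qF ^ (-(n : ℤ) * k))) • eMat n n (n+1) else 0)
  else
    (-(qF ^ (-((i.val : ℤ) + 1) * k))) • eMat n (i.val + 1) (i.val + 2)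
      + (xiF n ^ k * qF ^ (((i.val : ℤ) + 1) * k)) • eMat n (2*n - i.val - 1) (2*n - i.val)

/-- The image of the Drinfeld generator `a_{i,k}` in the vector representation. -/
def AOp (n : ℕ) (i : Fin n) (k : ℤ) : Matrix (Fin (2*n)) (Fin (2*n)) FF :=
  if i.val + 1 = n then
    (if 2 ∣ k then
      (qNum (qF ^ (2:ℤ)) (k/2) / ((k/2 : ℤ) : FF)) •
        ((qF ^ (2:ℤ)) ^ (-(n : ℤ) * (k/2)) •
          ((qF ^ (2:ℤ)) ^ (-(k/2)) • eMat n (n+1) (n+1) - (qF ^ (2:ℤ)) ^ (k/2) • eMat n n n))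
    else 0)
  else
    (qNum qF k / (k : FF)) •
      (qF ^ (-((i.val : ℤ) + 1) * k) •
          (qF ^ (-k) • eMat n (i.val + 2) (i.val + 2) - qF ^ k • eMat n (i.val + 1) (i.val + 1))
        + (xiF n ^ k * qF ^ (((i.val : ℤ) + 1) * k)) •
          (qF ^ (-k) • eMat n (2*n - i.val) (2*n - i.val)
            - qF ^ k • eMat n (2*n - i.val - 1) (2*n - i.val - 1)))

/-- The image of `k_i` in the vector representation. -/
def KOp (n : ℕ) (i : Fin n) : Matrix (Fin (2*n)) (Fin (2*n)) FF :=
  fun r c =>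
    if r ≠ c then 0
    else if i.val + 1 = n then
      (if r.val + 1 = n + 1 then qF ^ (2:ℤ) else if r.val + 1 = n then qF ^ (-2:ℤ) else 1)
    else
      (if r.val + 1 = i.val + 2 ∨ r.val + 1 = 2*n - i.val then qF
       else if r.val + 1 = i.val + 1 ∨ r.val + 1 = 2*n - i.val - 1 then qF⁻¹ else 1)

/-- The inverse of `KOp n i`. -/
def KOpInv (n : ℕ) (i : Fin n) : Matrix (Fin (2*n)) (Fin (2*n)) FF :=
  fun r c =>
    if r ≠ c then 0
    else if i.val + 1 = n then
      (if r.val + 1 = n + 1 then qF ^ (-2:ℤ) else if r.val + 1 = n then qF ^ (2:ℤ) else 1)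
    else
      (if r.val + 1 = i.val + 2 ∨ r.val + 1 = 2*n - i.val then qF⁻¹
       else if r.val + 1 = i.val + 1 ∨ r.val + 1 = 2*n - i.val - 1 then qF else 1)

theorem qF_ne_zero : qF ≠ 0 := RatFunc.X_ne_zero

theorem xiF_ne_zero (n : ℕ) : xiF n ≠ 0 :=
  neg_ne_zero.mpr (zpow_ne_zero _ qF_ne_zero)

theorem eMat_mul_of_ne (n a b c d : ℕ) (h : b ≠ c) : eMat n a b * eMat n c d = 0 := by
  ext r s
  rw [Matrix.mul_apply]
  refine Finset.sum_eq_zero fun x _ => ?_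
  simp only [eMat]
  split_ifs <;> first | omega | simp

/-- The range hypothesis on the inner label matters: `eMat` vanishes for labels outside `1..2n`. -/
theorem eMat_mul_self (n a b d : ℕ) (h1 : 1 ≤ b) (h2 : b ≤ 2 * n) :
    eMat n a b * eMat n b d = eMat n a d := by
  ext r s
  rw [Matrix.mul_apply, Finset.sum_eq_single (⟨b - 1, by omega⟩ : Fin (2 * n))]
  · have hb : b - 1 + 1 = b := by omega
    simp only [eMat, hb]
    split_ifs <;> first | omega | simp_all
  · intro x _ hx
    have hx' : x.val + 1 ≠ b := fun e => hx (Fin.ext (by simp; omega))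
    simp [eMat, hx']
  · simp

/-- The commutators `[x^+_{i,m}, x^-_{j,l}]` in the vector representation. -/
theorem X_plus_minus_commutators (n : ℕ) (hn : 2 ≤ n) :
    (∀ i j : Fin n, i ≠ j → ∀ m l : ℤ,
        XP n i m * XM n j l - XM n j l * XP n i m = 0)
    ∧ (∀ i : Fin n, i.val + 1 < n → ∀ m l : ℤ,
        XP n i m * XM n i l - XM n i l * XP n i m
          = qF ^ (-((i.val : ℤ) + 1) * (m + l)) •
              (eMat n (i.val + 2) (i.val + 2) - eMat n (i.val + 1) (i.val + 1))
            + (xiF n ^ (m + l) * qF ^ (((i.val : ℤ) + 1) * (m + l))) •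
              (eMat n (2*n - i.val) (2*n - i.val) - eMat n (2*n - i.val - 1) (2*n - i.val - 1)))
    ∧ (∀ i : Fin n, i.val + 1 = n → ∀ m l : ℤ,
        XP n i (2*m) * XM n i (2*l) - XM n i (2*l) * XP n i (2*m)
          = qF ^ (-(2 * (n : ℤ)) * (m + l)) • (eMat n (n+1) (n+1) - eMat n n n)) := by
  refine ⟨fun i j hij m l => ?_, fun i hi m l => ?_, fun i hi m l => ?_⟩
  · have hij' : i.val ≠ j.val := fun e => hij (Fin.ext e)
    have hi := i.isLt
    have hj := j.isLt
    unfold XP XM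
    split_ifs <;>
      simp (disch := omega) only [add_mul, mul_add, smul_mul_assoc, mul_smul_comm,
        eMat_mul_of_ne, smul_zero, add_zero, sub_zero, mul_zero, zero_mul]
  · have hne : i.val + 1 ≠ n := by omega
    simp (disch := omega) only [XP, XM, if_neg hne, add_mul, mul_add, smul_mul_assoc, mul_smul_comm,
      eMat_mul_of_ne, eMat_mul_self, smul_zero, add_zero, zero_add]
    simp only [zpow_add₀ qF_ne_zero, zpow_add₀ (xiF_ne_zero n), smul_smul, smul_sub, neg_mul_neg,
      mul_comm, mul_left_comm, mul_assoc]
    abel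
  · have h2 : ∀ k : ℤ, (2 : ℤ) ∣ 2 * k := fun k => dvd_mul_right 2 k
    simp (disch := omega) only [XP, XM, if_pos hi, if_pos (h2 _), smul_mul_assoc, mul_smul_comm,
      eMat_mul_self]
    rw [show -(2 * (n : ℤ)) * (m + l) = -(n : ℤ) * (2 * m) + -(n : ℤ) * (2 * l) by ring,
      zpow_add₀ qF_ne_zero]
    simp only [smul_smul, smul_sub, neg_mul_neg, mul_comm, mul_left_comm]

end
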